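/- Every four-dimensional non-split complex Zinbiel algebra A with dim A² = 2, dim A³ = 1, and dim A⁴ = 0 is isomorphic to one of the following algebras (given by the nonzero products on a basis e_1, e_2, e_3, e_4): A_2: e_1∘e_1=e_3, e_1∘e_2=e_4, e_1∘e_3=e_4, e_3∘e_1=2e_4; A_3: e_1∘e_1=e_3, e_1∘e_3=e_4, e_2∘e_2=e_4, e_3∘e_1=2e_4; A_4: e_1∘e_2=e_3, e_1∘e_3=e_4, e_2∘e_1=−e_3; A_5: e_1∘e_2=e_3, e_1∘e_3=e_4, e_2∘e_1=−e_3, e_2∘e_2=e_4. -/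

import Mathlib

/-- A bilinear multiplication `mul` is a *Zinbiel* multiplication if it satisfies
`(x∘y)∘z = x∘(y∘z) + x∘(z∘y)`. -/
def IsZinbiel {K A : Type*} [CommRing K] [AddCommGroup A] [Module K A]
    (mul : A →ₗ[K] A →ₗ[K] A) : Prop :=
  ∀ x y z : A, mul (mul x y) z = mul x (mul y z) + mul x (mul z y)

/-- The descending series of a (Zinbiel) algebra: `zpow mul i` is `A^i`,
with `A^1 = A` and `A^{k+1} = A ∘ A^k` (we also set `A^0 = A` for convenience). -/
def zpow {K A : Type*} [CommRing K] [AddCommGroup A] [Module K A]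
    (mul : A →ₗ[K] A →ₗ[K] A) : ℕ → Submodule K A
  | 0 => ⊤
  | 1 => ⊤
  | (k+2) => Submodule.span K {z | ∃ a : A, ∃ b ∈ zpow mul (k+1), z = mul a b}

/-- The bilinear multiplication on `Fin n → ℂ` determined by structure constants `c`:
`e_i ∘ e_j = ∑ k, c i j k • e_k`. -/
noncomputable def mulOf (n : ℕ) (c : Fin n → Fin n → Fin n → ℂ) :
    (Fin n → ℂ) →ₗ[ℂ] (Fin n → ℂ) →ₗ[ℂ] (Fin n → ℂ) :=
  LinearMap.mk₂ ℂ (fun x y k => ∑ i, ∑ j, x i * y j * c i j k)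
    (fun x x' y => by
      funext k
      simp [add_mul, Finset.sum_add_distrib])
    (fun a x y => by
      funext k
      simp [Finset.mul_sum, mul_assoc])
    (fun x y y' => by
      funext k
      simp [mul_add, add_mul, Finset.sum_add_distrib])
    (fun a x y => by
      funext k
      simp [Finset.mul_sum, mul_assoc, mul_left_comm])

/-- Two bilinear multiplications give isomorphic algebras if there is a linear
equivalence intertwining them. -/
def Isom {A B : Type*} [AddCommGroup A] [Module ℂ A] [AddCommGroup B] [Module ℂ B]
    (mulA : A →ₗ[ℂ] A →ₗ[ℂ] A) (mulB : B →ₗ[ℂ] B →ₗ[ℂ] B) : Prop :=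
  ∃ f : A ≃ₗ[ℂ] B, ∀ x y : A, f (mulA x y) = mulB (f x) (f y)

/-- Structure constants of the nul-filiform algebra `NF_n`:
`e_i ∘ e_j = C(i+j-1, j) e_{i+j}` for `2 ≤ i+j ≤ n` (1-indexed). -/
noncomputable def NFc (n : ℕ) : Fin n → Fin n → Fin n → ℂ := fun i j k =>
  if (i : ℕ) + j + 1 = (k : ℕ) then (((i : ℕ) + j + 1).choose ((j : ℕ) + 1) : ℂ) else 0

/-- The nul-filiform Zinbiel algebra `NF_n` (as a multiplication on `Fin n → ℂ`). -/
noncomputable def NFmul (n : ℕ) : (Fin n → ℂ) →ₗ[ℂ] (Fin n → ℂ) →ₗ[ℂ] (Fin n → ℂ) :=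
  mulOf n (NFc n)

/-- The sixteen families of 4-dimensional complex Zinbiel algebras from the classification
theorem, given by structure constants on a basis `e_1, e_2, e_3, e_4`;
`dim4Table k α` corresponds to `A_{k+1}` (the parameter `α` is used only by
`A_8`, `A_9` and `A_15`). -/
noncomputable def dim4Table : Fin 16 → ℂ → (Fin 4 → Fin 4 → Fin 4 → ℂ) := fun idx α =>
  ![ -- A_1 : e1e1=e2, e1e2=e3, e2e1=2e3, e1e3=e4, e2e2=3e4, e3e1=3e4
    ![![![0,1,0,0], ![0,0,1,0], ![0,0,0,1], ![0,0,0,0]],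
      ![![0,0,2,0], ![0,0,0,3], ![0,0,0,0], ![0,0,0,0]],
      ![![0,0,0,3], ![0,0,0,0], ![0,0,0,0], ![0,0,0,0]],
      ![![0,0,0,0], ![0,0,0,0], ![0,0,0,0], ![0,0,0,0]]],
    -- A_2 : e1e1=e3, e1e2=e4, e1e3=e4, e3e1=2e4
    ![![![0,0,1,0], ![0,0,0,1], ![0,0,0,1], ![0,0,0,0]],
      ![![0,0,0,0], ![0,0,0,0], ![0,0,0,0], ![0,0,0,0]],
      ![![0,0,0,2], ![0,0,0,0], ![0,0,0,0], ![0,0,0,0]],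
      ![![0,0,0,0], ![0,0,0,0], ![0,0,0,0], ![0,0,0,0]]],
    -- A_3 : e1e1=e3, e1e3=e4, e2e2=e4, e3e1=2e4
    ![![![0,0,1,0], ![0,0,0,0], ![0,0,0,1], ![0,0,0,0]],
      ![![0,0,0,0], ![0,0,0,1], ![0,0,0,0], ![0,0,0,0]],
      ![![0,0,0,2], ![0,0,0,0], ![0,0,0,0], ![0,0,0,0]],
      ![![0,0,0,0], ![0,0,0,0], ![0,0,0,0], ![0,0,0,0]]],
    -- A_4 : e1e2=e3, e1e3=e4, e2e1=-e3
    ![![![0,0,0,0], ![0,0,1,0], ![0,0,0,1], ![0,0,0,0]],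
      ![![0,0,-1,0], ![0,0,0,0], ![0,0,0,0], ![0,0,0,0]],
      ![![0,0,0,0], ![0,0,0,0], ![0,0,0,0], ![0,0,0,0]],
      ![![0,0,0,0], ![0,0,0,0], ![0,0,0,0], ![0,0,0,0]]],
    -- A_5 : e1e2=e3, e1e3=e4, e2e1=-e3, e2e2=e4
    ![![![0,0,0,0], ![0,0,1,0], ![0,0,0,1], ![0,0,0,0]],
      ![![0,0,-1,0], ![0,0,0,1], ![0,0,0,0], ![0,0,0,0]],
      ![![0,0,0,0], ![0,0,0,0], ![0,0,0,0], ![0,0,0,0]],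
      ![![0,0,0,0], ![0,0,0,0], ![0,0,0,0], ![0,0,0,0]]],
    -- A_6 : e1e1=e4, e1e2=e3, e2e1=-e3, e2e2=-2e3+e4
    ![![![0,0,0,1], ![0,0,1,0], ![0,0,0,0], ![0,0,0,0]],
      ![![0,0,-1,0], ![0,0,-2,1], ![0,0,0,0], ![0,0,0,0]],
      ![![0,0,0,0], ![0,0,0,0], ![0,0,0,0], ![0,0,0,0]],
      ![![0,0,0,0], ![0,0,0,0], ![0,0,0,0], ![0,0,0,0]]],
    -- A_7 : e1e2=e3, e2e1=e4, e2e2=-e3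
    ![![![0,0,0,0], ![0,0,1,0], ![0,0,0,0], ![0,0,0,0]],
      ![![0,0,0,1], ![0,0,-1,0], ![0,0,0,0], ![0,0,0,0]],
      ![![0,0,0,0], ![0,0,0,0], ![0,0,0,0], ![0,0,0,0]],
      ![![0,0,0,0], ![0,0,0,0], ![0,0,0,0], ![0,0,0,0]]],
    -- A_8(α) : e1e1=e3, e1e2=e4, e2e1=-α·e3, e2e2=-e4
    ![![![0,0,1,0], ![0,0,0,1], ![0,0,0,0], ![0,0,0,0]],
      ![![0,0,-α,0], ![0,0,0,-1], ![0,0,0,0], ![0,0,0,0]],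
      ![![0,0,0,0], ![0,0,0,0], ![0,0,0,0], ![0,0,0,0]],
      ![![0,0,0,0], ![0,0,0,0], ![0,0,0,0], ![0,0,0,0]]],
    -- A_9(α) : e1e1=e4, e1e2=α·e4, e2e1=-α·e4, e2e2=e4, e3e3=e4
    ![![![0,0,0,1], ![0,0,0,α], ![0,0,0,0], ![0,0,0,0]],
      ![![0,0,0,-α], ![0,0,0,1], ![0,0,0,0], ![0,0,0,0]],
      ![![0,0,0,0], ![0,0,0,0], ![0,0,0,1], ![0,0,0,0]],
      ![![0,0,0,0], ![0,0,0,0], ![0,0,0,0], ![0,0,0,0]]],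
    -- A_10 : e1e2=e4, e1e3=e4, e2e1=-e4, e2e2=e4, e3e1=e4
    ![![![0,0,0,0], ![0,0,0,1], ![0,0,0,1], ![0,0,0,0]],
      ![![0,0,0,-1], ![0,0,0,1], ![0,0,0,0], ![0,0,0,0]],
      ![![0,0,0,1], ![0,0,0,0], ![0,0,0,0], ![0,0,0,0]],
      ![![0,0,0,0], ![0,0,0,0], ![0,0,0,0], ![0,0,0,0]]],
    -- A_11 : e1e1=e4, e1e2=e4, e2e1=-e4, e3e3=e4
    ![![![0,0,0,1], ![0,0,0,1], ![0,0,0,0], ![0,0,0,0]],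
      ![![0,0,0,-1], ![0,0,0,0], ![0,0,0,0], ![0,0,0,0]],
      ![![0,0,0,0], ![0,0,0,0], ![0,0,0,1], ![0,0,0,0]],
      ![![0,0,0,0], ![0,0,0,0], ![0,0,0,0], ![0,0,0,0]]],
    -- A_12 : e1e2=e3, e2e1=e4
    ![![![0,0,0,0], ![0,0,1,0], ![0,0,0,0], ![0,0,0,0]],
      ![![0,0,0,1], ![0,0,0,0], ![0,0,0,0], ![0,0,0,0]],
      ![![0,0,0,0], ![0,0,0,0], ![0,0,0,0], ![0,0,0,0]],
      ![![0,0,0,0], ![0,0,0,0], ![0,0,0,0], ![0,0,0,0]]],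
    -- A_13 : e1e2=e3, e2e1=-e3, e2e2=e4
    ![![![0,0,0,0], ![0,0,1,0], ![0,0,0,0], ![0,0,0,0]],
      ![![0,0,-1,0], ![0,0,0,1], ![0,0,0,0], ![0,0,0,0]],
      ![![0,0,0,0], ![0,0,0,0], ![0,0,0,0], ![0,0,0,0]],
      ![![0,0,0,0], ![0,0,0,0], ![0,0,0,0], ![0,0,0,0]]],
    -- A_14 : e2e1=e4, e2e2=e3
    ![![![0,0,0,0], ![0,0,0,0], ![0,0,0,0], ![0,0,0,0]],
      ![![0,0,0,1], ![0,0,1,0], ![0,0,0,0], ![0,0,0,0]],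
      ![![0,0,0,0], ![0,0,0,0], ![0,0,0,0], ![0,0,0,0]],
      ![![0,0,0,0], ![0,0,0,0], ![0,0,0,0], ![0,0,0,0]]],
    -- A_15(α), α ≠ 1 : e1e2=e4, e2e2=e3, e2e1=((1+α)/(1-α))·e4
    ![![![0,0,0,0], ![0,0,0,1], ![0,0,0,0], ![0,0,0,0]],
      ![![0,0,0,(1+α)/(1-α)], ![0,0,1,0], ![0,0,0,0], ![0,0,0,0]],
      ![![0,0,0,0], ![0,0,0,0], ![0,0,0,0], ![0,0,0,0]],
      ![![0,0,0,0], ![0,0,0,0], ![0,0,0,0], ![0,0,0,0]]],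
    -- A_16 : e1e2=e4, e2e1=-e4, e3e3=e4
    ![![![0,0,0,0], ![0,0,0,1], ![0,0,0,0], ![0,0,0,0]],
      ![![0,0,0,-1], ![0,0,0,0], ![0,0,0,0], ![0,0,0,0]],
      ![![0,0,0,0], ![0,0,0,0], ![0,0,0,1], ![0,0,0,0]],
      ![![0,0,0,0], ![0,0,0,0], ![0,0,0,0], ![0,0,0,0]]]] idx

/-- The multiplication of the algebra `A_{k+1}` (with parameter `α`) on `Fin 4 → ℂ`. -/
noncomputable def dim4Alg (k : Fin 16) (α : ℂ) :
    (Fin 4 → ℂ) →ₗ[ℂ] (Fin 4 → ℂ) →ₗ[ℂ] (Fin 4 → ℂ) :=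
  mulOf 4 (dim4Table k α)

/-- A (Zinbiel) algebra is *split* if it is the direct sum of two nonzero ideals. -/
def IsSplit {A : Type*} [AddCommGroup A] [Module ℂ A]
    (mul : A →ₗ[ℂ] A →ₗ[ℂ] A) : Prop :=
  ∃ I J : Submodule ℂ A, I ≠ ⊥ ∧ J ≠ ⊥ ∧ I ⊓ J = ⊥ ∧ I ⊔ J = ⊤ ∧
    (∀ a : A, ∀ x ∈ I, mul a x ∈ I ∧ mul x a ∈ I) ∧
    (∀ a : A, ∀ x ∈ J, mul a x ∈ J ∧ mul x a ∈ J)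

/-!
Choose `u ∈ A²` spanning `A²` modulo `A³` and `v` spanning `A³`. Then `x ∘ u = l(x) v`,
`u ∘ x = r(x) v` and `x ∘ y ≡ B(x, y) u` modulo `A³` for linear forms `l`, `r` and a bilinear
form `B`, and the Zinbiel identity becomes `B(x, y) r(z) = l(x) (B(y, z) + B(z, y))`. Since `l`
and `B` do not vanish, either `r = 2 l` and `B = c (l ⊗ l)`, or `r = 0` and `B` is skew-symmetric.
In a basis `e₁, e₂, u, v` with `l(e₁) = 1` and `l(e₂) = 0`, only the `v`-components of the products
of `e₁` and `e₂` remain free, and a triangular change of basis removes them: the first case leads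
to `A_2`, to `A_3`, or to a vector outside `A²` that annihilates `A` and hence splits off, the
second to `A_4` or `A_5`.
-/

open Module

section DescendingSeries

variable {K A : Type*} [CommRing K] [AddCommGroup A] [Module K A] {mul : A →ₗ[K] A →ₗ[K] A}

lemma mul_mem_zpow_succ (a : A) : ∀ {n : ℕ} {b : A}, b ∈ zpow mul n → mul a b ∈ zpow mul (n + 1)
  | 0, _, _ => Submodule.mem_top
  | _ + 1, b, hb => Submodule.subset_span ⟨a, b, hb, rfl⟩

lemma zpow_add_two_le_iff {n : ℕ} {N : Submodule K A} :
    zpow mul (n + 2) ≤ N ↔ ∀ a, ∀ b ∈ zpow mul (n + 1), mul a b ∈ N := by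
  refine Submodule.span_le.trans ⟨fun h a b hb ↦ h ⟨a, b, hb, rfl⟩, ?_⟩
  rintro h _ ⟨a, b, hb, rfl⟩
  exact h a b hb

lemma zpow_antitone (mul : A →ₗ[K] A →ₗ[K] A) : Antitone (zpow mul) := by
  refine antitone_nat_of_succ_le fun n ↦ ?_
  induction n with
  | zero => exact le_top
  | succ n ih => exact zpow_add_two_le_iff.2 fun a b hb ↦ mul_mem_zpow_succ a (ih hb)

lemma IsZinbiel.mul_mem_zpow_add (hmul : IsZinbiel mul) {m n : ℕ} {x y : A}
    (hx : x ∈ zpow mul m) (hy : y ∈ zpow mul n) : mul x y ∈ zpow mul (m + n) := by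
  -- The term `a ∘ (y ∘ b)` of the Zinbiel identity swaps the factors, so we induct on `m + n`.
  induction hs : m + n using Nat.strong_induction_on generalizing m n x y with
  | _ s ih =>
    subst hs
    match m with
    | 0 => exact zpow_antitone mul (by lia) (mul_mem_zpow_succ x hy)
    | 1 => simpa only [add_comm 1 n] using mul_mem_zpow_succ x hy
    | m + 2 =>
      suffices zpow mul (m + 2) ≤ (zpow mul (m + 2 + n)).comap (mul.flip y) from this hx
      refine zpow_add_two_le_iff.2 fun a b hb ↦ ?_
      have hby : mul b y ∈ zpow mul (m + 1 + n) := ih _ (by lia) hb hy rfl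
      have hyb : mul y b ∈ zpow mul (m + 1 + n) := ih _ (by lia) hy hb (by lia)
      rw [Submodule.mem_comap, LinearMap.flip_apply, hmul a b y,
        show m + 2 + n = m + 1 + n + 1 by lia]
      exact add_mem (mul_mem_zpow_succ a hby) (mul_mem_zpow_succ a hyb)

end DescendingSeries

lemma isSplit_of_annihilator {A : Type*} [AddCommGroup A] [Module ℂ A]
    {mul : A →ₗ[ℂ] A →ₗ[ℂ] A} {e : A} (hleft : ∀ x, mul e x = 0) (hright : ∀ x, mul x e = 0)
    (he : e ∉ zpow mul 2) (hsq : zpow mul 2 ≠ ⊥) : IsSplit mul := by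
  obtain ⟨J, hJ, hcompl⟩ := (Submodule.disjoint_span_singleton_of_notMem he).exists_isCompl
  have mul_mem (x y : A) : mul x y ∈ J := hJ (mul_mem_zpow_succ (n := 1) x Submodule.mem_top)
  refine ⟨J, ℂ ∙ e, fun h ↦ hsq (le_bot_iff.1 (h ▸ hJ)), fun h ↦ ?_, hcompl.inf_eq_bot,
    hcompl.sup_eq_top, fun a x _ ↦ ⟨mul_mem a x, mul_mem x a⟩, fun a x hx ↦ ?_⟩
  · exact he (Submodule.span_singleton_eq_bot.1 h ▸ zero_mem _)
  · obtain ⟨t, rfl⟩ := Submodule.mem_span_singleton.1 hx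
    simp [hleft, hright]

section FunctionalEquation

variable {X K : Type*} [Field K]

lemma eq_two_mul_and_exists_eq_mul {f l r : X → K}
    (h : ∀ y z, f y * r z = l y * f z + l z * f y) (hf : ∃ y, f y ≠ 0) (hr : ∃ z, r z ≠ 0) :
    (∀ x, r x = 2 * l x) ∧ ∃ c ≠ 0, ∀ x, f x = c * l x := by
  obtain ⟨y₀, hy₀⟩ := hf
  obtain ⟨z₀, hz₀⟩ := hr
  have hsymm (y z : X) : f y * r z = f z * r y := by rw [h, h, add_comm]
  have hrl (y : X) : r y = 2 * l y := by
    by_cases hy : f y = 0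
    · have hly : l y = 0 := by simpa [hy, hy₀] using h y y₀
      have hry : r y = 0 := by simpa [hy, hy₀] using hsymm y₀ y
      rw [hly, hry, mul_zero]
    · exact mul_left_cancel₀ hy (by rw [h]; ring)
  have hry₀ : 2 * l y₀ ≠ 0 := by
    rw [← hrl]
    exact right_ne_zero_of_mul (hsymm y₀ z₀ ▸ mul_ne_zero hy₀ hz₀)
  have h2 : (2 : K) ≠ 0 := left_ne_zero_of_mul hry₀
  have hly₀ : l y₀ ≠ 0 := right_ne_zero_of_mul hry₀
  refine ⟨hrl, f y₀ / l y₀, div_ne_zero hy₀ hly₀, fun x ↦ ?_⟩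
  have hx : f x * (2 * l y₀) = f y₀ * (2 * l x) := by rw [← hrl, ← hrl, hsymm]
  field_simp
  exact mul_left_cancel₀ h2 (by linear_combination hx)

theorem eq_mul_mul_or_skew {B : X → X → K} {l r : X → K}
    (h : ∀ x y z, B x y * r z = l x * (B y z + B z y)) (hl : ∃ x, l x ≠ 0)
    (hB : ∃ x y, B x y ≠ 0) :
    ((∀ x, r x = 2 * l x) ∧ ∃ c ≠ 0, ∀ x y, B x y = c * (l x * l y)) ∨
      ((∀ x, r x = 0) ∧ ∀ x y, B y x = -B x y) := by
  obtain ⟨x₀, hx₀⟩ := hl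
  by_cases hr : ∃ z, r z ≠ 0
  · left
    obtain ⟨f, hf⟩ : ∃ f : X → K, ∀ x y, B x y = l x * f y := by
      obtain ⟨z₀, hz₀⟩ := hr
      exact ⟨fun y ↦ (B y z₀ + B z₀ y) / r z₀, fun x y ↦ by
        rw [← mul_div_assoc, ← h, mul_div_cancel_right₀ _ hz₀]⟩
    have hfr (y z : X) : f y * r z = l y * f z + l z * f y :=
      mul_left_cancel₀ hx₀ (by simpa only [hf, mul_assoc] using h x₀ y z)
    obtain ⟨x₁, y₁, hxy⟩ := hB
    have hfy₁ : f y₁ ≠ 0 := right_ne_zero_of_mul (hf x₁ y₁ ▸ hxy)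
    obtain ⟨hrl, c, hc, hfl⟩ := eq_two_mul_and_exists_eq_mul hfr ⟨y₁, hfy₁⟩ hr
    exact ⟨hrl, c, hc, fun x y ↦ by rw [hf, hfl, mul_left_comm]⟩
  · right
    push Not at hr
    refine ⟨hr, fun x y ↦ eq_neg_of_add_eq_zero_right ?_⟩
    simpa [hr, hx₀] using h x₀ x y

end FunctionalEquation

section StructureConstants

/-- The basis `b` has structure constants `c`, i.e. `b i ∘ b j = ∑ k, c i j k • b k`: the
algebra has the multiplication table `c` in the basis `b`. -/
def HasStructureConstants {ι K A : Type*} [Fintype ι] [CommRing K] [AddCommGroup A] [Module K A]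
    (mul : A →ₗ[K] A →ₗ[K] A) (b : Basis ι K A) (c : ι → ι → ι → K) : Prop :=
  ∀ i j, mul (b i) (b j) = ∑ k, c i j k • b k

lemma HasStructureConstants.isom {n : ℕ} {A : Type*} [AddCommGroup A] [Module ℂ A]
    {mul : A →ₗ[ℂ] A →ₗ[ℂ] A} {b : Basis (Fin n) ℂ A} {c : Fin n → Fin n → Fin n → ℂ}
    (h : HasStructureConstants mul b c) : Isom mul (mulOf n c) := by
  suffices mul.compr₂ b.equivFun.toLinearMap =
      (mulOf n c).compl₁₂ b.equivFun.toLinearMap b.equivFun.toLinearMap from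
    ⟨b.equivFun, fun x y ↦ LinearMap.congr_fun₂ this x y⟩
  refine b.ext fun i ↦ b.ext fun j ↦ funext fun k ↦ ?_
  simp [h i j, mulOf, Finsupp.single_apply]

lemma HasStructureConstants.zpow_two_le_ker_coord {ι K A : Type*} [Fintype ι] [CommRing K]
    [AddCommGroup A] [Module K A] {mul : A →ₗ[K] A →ₗ[K] A} {b : Basis ι K A}
    {c : ι → ι → ι → K} (h : HasStructureConstants mul b c) {k : ι} (hk : ∀ i j, c i j k = 0) :
    zpow mul 2 ≤ LinearMap.ker (b.coord k) := by
  suffices mul.compr₂ (b.coord k) = 0 from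
    zpow_add_two_le_iff.2 fun x y _ ↦ LinearMap.congr_fun₂ this x y
  classical
  refine b.ext fun i ↦ b.ext fun j ↦ ?_
  simp [h i j, Finsupp.single_apply, hk]

lemma exists_basis_coe_eq_of_triangular {ι K A : Type*} [Finite ι] [LinearOrder ι] [Field K]
    [AddCommGroup A] [Module K A] (b : Basis ι K A) {v : ι → A} (hdiag : ∀ i, b.repr (v i) i ≠ 0)
    (htri : ∀ i j, i < j → b.repr (v j) i = 0) : ∃ b' : Basis ι K A, ⇑b' = v := by
  cases nonempty_fintype ι
  have hlower : (b.toMatrix v).IsLowerTriangular := htri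
  have hdet : IsUnit (b.det v) := by
    rw [b.det_apply, Matrix.det_of_isLowerTriangular _ hlower, isUnit_iff_ne_zero]
    exact Finset.prod_ne_zero_iff.2 fun i _ ↦ hdiag i
  obtain ⟨hli, hspan⟩ := b.is_basis_iff_det.2 hdet
  exact ⟨Basis.mk hli hspan.ge, Basis.coe_mk _ _⟩

lemma isom_mulOf_of_triangular {n : ℕ} {A : Type*} [AddCommGroup A] [Module ℂ A]
    {mul : A →ₗ[ℂ] A →ₗ[ℂ] A} (b : Basis (Fin n) ℂ A) (v : Fin n → A)
    {c : Fin n → Fin n → Fin n → ℂ} (hdiag : ∀ i, b.repr (v i) i ≠ 0)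
    (htri : ∀ i j, i < j → b.repr (v j) i = 0)
    (hmul : ∀ i j, mul (v i) (v j) = ∑ k, c i j k • v k) : Isom mul (mulOf n c) := by
  obtain ⟨b', rfl⟩ := exists_basis_coe_eq_of_triangular b hdiag htri
  exact HasStructureConstants.isom hmul

/-- The multiplication table `e₁e₁ = c e₃ + r e₄`, `e₁e₂ = p e₄`, `e₂e₁ = q e₄`, `e₂e₂ = s e₄`,
`e₁e₃ = e₄`, `e₃e₁ = 2 e₄` of an algebra whose product modulo `A³` is symmetric. -/
def symmTable {K : Type*} [CommRing K] (c r p q s : K) : Fin 4 → Fin 4 → Fin 4 → K :=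
  ![![![0, 0, c, r], ![0, 0, 0, p], ![0, 0, 0, 1], ![0, 0, 0, 0]],
    ![![0, 0, 0, q], ![0, 0, 0, s], ![0, 0, 0, 0], ![0, 0, 0, 0]],
    ![![0, 0, 0, 2], ![0, 0, 0, 0], ![0, 0, 0, 0], ![0, 0, 0, 0]],
    ![![0, 0, 0, 0], ![0, 0, 0, 0], ![0, 0, 0, 0], ![0, 0, 0, 0]]]

/-- The multiplication table `e₁e₁ = p e₄`, `e₁e₂ = c e₃ + r e₄`, `e₂e₁ = -c e₃ + q e₄`,
`e₂e₂ = s e₄`, `e₁e₃ = e₄` of an algebra whose product modulo `A³` is skew-symmetric. -/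
def skewTable {K : Type*} [CommRing K] (c r p q s : K) : Fin 4 → Fin 4 → Fin 4 → K :=
  ![![![0, 0, 0, p], ![0, 0, c, r], ![0, 0, 0, 1], ![0, 0, 0, 0]],
    ![![0, 0, -c, q], ![0, 0, 0, s], ![0, 0, 0, 0], ![0, 0, 0, 0]],
    ![![0, 0, 0, 0], ![0, 0, 0, 0], ![0, 0, 0, 0], ![0, 0, 0, 0]],
    ![![0, 0, 0, 0], ![0, 0, 0, 0], ![0, 0, 0, 0], ![0, 0, 0, 0]]]

end StructureConstants

section LinearAlgebra

variable {K V W : Type*} [Field K] [AddCommGroup V] [Module K V] [AddCommGroup W] [Module K W]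

lemma linearIndependent_of_flag {n : ℕ} {v : Fin n → V} (F : Fin n → Submodule K V)
    (hmem : ∀ i j, i < j → v j ∈ F i) (hnotMem : ∀ i, v i ∉ F i) : LinearIndependent K v := by
  induction n with
  | zero => exact linearIndependent_empty_type
  | succ n ih =>
    refine linearIndependent_finSucc.2 ⟨?_, fun h ↦ hnotMem 0 (Submodule.span_le.2 ?_ h)⟩
    · exact ih (Fin.tail F) (fun i j hij ↦ hmem _ _ (Fin.succ_lt_succ_iff.2 hij))
        fun i ↦ hnotMem i.succ
    · exact Set.range_subset_iff.2 fun i ↦ hmem 0 i.succ i.succ_pos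

lemma span_image_eq_of_card_eq_finrank {ι : Type*} {v : ι → V} (hv : LinearIndependent K v)
    (s : Finset ι) {N : Submodule K V} [FiniteDimensional K N] (hs : ∀ i ∈ s, v i ∈ N)
    (hN : finrank K N = s.card) : Submodule.span K (v '' s) = N := by
  refine Submodule.eq_of_le_of_finrank_eq (Submodule.span_le.2 (Set.image_subset_iff.2 hs)) ?_
  rw [hN, Set.image_eq_range]
  exact (finrank_span_eq_card (hv.comp ((↑) : s → ι) Subtype.val_injective)).trans (by simp)

lemma exists_mem_ker_notMem_of_finrank_lt [FiniteDimensional K V] {f : V →ₗ[K] W}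
    {N : Submodule K V} {P : Submodule K W} [FiniteDimensional K P] (hf : ∀ x, f x ∈ P)
    (hlt : finrank K N + finrank K P < finrank K V) : ∃ x ∉ N, f x = 0 := by
  by_contra! h
  have hker : LinearMap.ker f ≤ N := fun x hx ↦ by_contra fun hxN ↦ h x hxN hx
  have hrange : LinearMap.range f ≤ P := by rintro _ ⟨x, rfl⟩; exact hf x
  have := Submodule.finrank_mono hker
  have := Submodule.finrank_mono hrange
  have := LinearMap.finrank_range_add_finrank_ker f
  lia

end LinearAlgebra

section AdaptedBasis

variable {K A : Type*} [Field K] [AddCommGroup A] [Module K A] {mul : A →ₗ[K] A →ₗ[K] A}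

/-- A basis of a four-dimensional algebra with `A⁴ = 0` that is compatible with the flag
`A ⊇ A² ⊇ A³`, normalized so that left multiplication on `b 2` is the `b 0`-coordinate. -/
structure IsAdaptedBasis (mul : A →ₗ[K] A →ₗ[K] A) (b : Basis (Fin 4) K A) : Prop where
  zpow_two : zpow mul 2 = Submodule.span K {b 2, b 3}
  zpow_three : zpow mul 3 = Submodule.span K {b 3}
  zpow_four : zpow mul 4 = ⊥
  mul_two (x : A) : mul x (b 2) = b.repr x 0 • b 3

lemma exists_mul_ne_zero_of_zpow_ne_bot {n : ℕ} (h : zpow mul (n + 2) ≠ ⊥) :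
    ∃ a, ∃ b ∈ zpow mul (n + 1), mul a b ≠ 0 := by
  contrapose! h
  exact le_bot_iff.1 (zpow_add_two_le_iff.2 h)

lemma IsZinbiel.mul_eq_zero (hmul : IsZinbiel mul) {k m n : ℕ} (hk : zpow mul k = ⊥) {x y : A}
    (hx : x ∈ zpow mul m) (hy : y ∈ zpow mul n) (hmn : k ≤ m + n) : mul x y = 0 := by
  simpa [hk] using zpow_antitone mul hmn (hmul.mul_mem_zpow_add hx hy)

lemma IsZinbiel.exists_basis_of_finrank_zpow [FiniteDimensional K A] (hmul : IsZinbiel mul)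
    (h1 : finrank K A = 4) (h2 : finrank K (zpow mul 2) = 2) (h3 : finrank K (zpow mul 3) = 1)
    (h4 : zpow mul 4 = ⊥) : ∃ b : Basis (Fin 4) K A,
      b 2 ∈ zpow mul 2 ∧ mul (b 0) (b 2) = b 3 ∧ mul (b 1) (b 2) = 0 := by
  obtain ⟨x, u, hu, hxu⟩ : ∃ x, ∃ u ∈ zpow mul 2, mul x u ≠ 0 :=
    exists_mul_ne_zero_of_zpow_ne_bot (Submodule.one_le_finrank_iff.1 h3.ge)
  obtain ⟨y, hy, hyu⟩ : ∃ y ∉ zpow mul 2, mul y u = 0 :=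
    exists_mem_ker_notMem_of_finrank_lt (f := mul.flip u) (fun x ↦ mul_mem_zpow_succ x hu) (by lia)
  have hu' : u ∉ zpow mul 3 := fun h ↦
    hxu (hmul.mul_eq_zero h4 (m := 1) Submodule.mem_top h le_rfl)
  have hv : mul x u ∈ zpow mul 3 := mul_mem_zpow_succ x hu
  have hv' : mul x u ∈ zpow mul 2 := zpow_antitone mul (by lia) hv
  have huu : mul u u = 0 := hmul.mul_eq_zero h4 hu hu le_rfl
  have hvu : mul (mul x u) u = 0 := hmul.mul_eq_zero h4 hv hu (by lia)
  have hli : LinearIndependent K ![x, y, u, mul x u] := by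
    refine linearIndependent_of_flag ![LinearMap.ker (mul.flip u), zpow mul 2, zpow mul 3, ⊥] ?_ ?_
    · simp [Fin.forall_fin_succ, hyu, huu, hvu, hu, hv', hv]
    · simp [Fin.forall_fin_succ, hxu, hy, hu']
  refine ⟨basisOfLinearIndependentOfCardEqFinrank hli (by simp [h1]), ?_⟩
  simp [hu, hyu]

lemma IsZinbiel.isAdaptedBasis [FiniteDimensional K A] (hmul : IsZinbiel mul)
    (h2 : finrank K (zpow mul 2) = 2) (h3 : finrank K (zpow mul 3) = 1) (h4 : zpow mul 4 = ⊥)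
    {b : Basis (Fin 4) K A} (hb₂ : b 2 ∈ zpow mul 2) (h02 : mul (b 0) (b 2) = b 3)
    (h12 : mul (b 1) (b 2) = 0) : IsAdaptedBasis mul b := by
  have hb₃ : b 3 ∈ zpow mul 3 := h02 ▸ mul_mem_zpow_succ (b 0) hb₂
  have hb₃' : b 3 ∈ zpow mul 2 := zpow_antitone mul (by lia) hb₃
  have h22 : mul (b 2) (b 2) = 0 := hmul.mul_eq_zero h4 hb₂ hb₂ le_rfl
  have h32 : mul (b 3) (b 2) = 0 := hmul.mul_eq_zero h4 hb₃ hb₂ (by lia)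
  refine ⟨?_, ?_, h4, fun x ↦ ?_⟩
  · simpa [Set.image_pair] using (span_image_eq_of_card_eq_finrank b.linearIndependent {2, 3}
      (by simp [hb₂, hb₃']) h2).symm
  · simpa using
      (span_image_eq_of_card_eq_finrank b.linearIndependent {3} (by simp [hb₃]) h3).symm
  · suffices mul.flip (b 2) = (b.coord 0).smulRight (b 3) from LinearMap.congr_fun this x
    refine b.ext fun i ↦ ?_
    fin_cases i <;> simp [h02, h12, h22, h32]

lemma IsZinbiel.exists_isAdaptedBasis [FiniteDimensional K A] (hmul : IsZinbiel mul)
    (h1 : finrank K A = 4) (h2 : finrank K (zpow mul 2) = 2) (h3 : finrank K (zpow mul 3) = 1)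
    (h4 : zpow mul 4 = ⊥) : ∃ b : Basis (Fin 4) K A, IsAdaptedBasis mul b := by
  obtain ⟨b, hb₂, h02, h12⟩ := hmul.exists_basis_of_finrank_zpow h1 h2 h3 h4
  exact ⟨b, hmul.isAdaptedBasis h2 h3 h4 hb₂ h02 h12⟩

namespace IsAdaptedBasis

variable {b : Basis (Fin 4) K A}

lemma two_mem (hb : IsAdaptedBasis mul b) : b 2 ∈ zpow mul 2 :=
  hb.zpow_two ▸ Submodule.subset_span (by simp)

lemma three_mem (hb : IsAdaptedBasis mul b) : b 3 ∈ zpow mul 3 :=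
  hb.zpow_three ▸ Submodule.mem_span_singleton_self _

lemma mul_three (hb : IsAdaptedBasis mul b) (x : A) : mul x (b 3) = 0 := by
  simpa [hb.zpow_four] using mul_mem_zpow_succ x hb.three_mem

lemma three_mul (hb : IsAdaptedBasis mul b) (hmul : IsZinbiel mul) (x : A) : mul (b 3) x = 0 :=
  hmul.mul_eq_zero hb.zpow_four hb.three_mem (n := 1) Submodule.mem_top le_rfl

lemma mul_eq (hb : IsAdaptedBasis mul b) (x y : A) :
    mul x y = b.repr (mul x y) 2 • b 2 + b.repr (mul x y) 3 • b 3 := by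
  have hxy : mul x y ∈ zpow mul 2 := mul_mem_zpow_succ (n := 1) x Submodule.mem_top
  obtain ⟨s, t, hst⟩ := Submodule.mem_span_pair.1 (hb.zpow_two ▸ hxy)
  simp [← hst]

lemma two_mul (hb : IsAdaptedBasis mul b) (hmul : IsZinbiel mul) (x : A) :
    mul (b 2) x = b.repr (mul (b 2) x) 3 • b 3 := by
  have hx : mul (b 2) x ∈ zpow mul 3 := hmul.mul_mem_zpow_add hb.two_mem (n := 1) Submodule.mem_top
  obtain ⟨t, ht⟩ := Submodule.mem_span_singleton.1 (hb.zpow_three ▸ hx)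
  simp [← ht]

lemma repr_mul_mul_repr_mul (hb : IsAdaptedBasis mul b) (hmul : IsZinbiel mul) (x y z : A) :
    b.repr (mul x y) 2 * b.repr (mul (b 2) z) 3 =
      b.repr x 0 * (b.repr (mul y z) 2 + b.repr (mul z y) 2) := by
  have mul_mul_right : ∀ x y z, mul x (mul y z) = (b.repr (mul y z) 2 * b.repr x 0) • b 3 := by
    intro x y z
    rw [hb.mul_eq y z, map_add, map_smul, map_smul, hb.mul_two, hb.mul_three]
    simp [smul_smul]
  have mul_mul_left : mul (mul x y) z = (b.repr (mul x y) 2 * b.repr (mul (b 2) z) 3) • b 3 := by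
    conv_lhs => rw [hb.mul_eq x y, map_add, map_smul, map_smul, LinearMap.add_apply,
      LinearMap.smul_apply, LinearMap.smul_apply, hb.three_mul hmul, hb.two_mul hmul]
    rw [smul_zero, add_zero, smul_smul]
  have hsmul := hmul x y z
  rw [mul_mul_left, mul_mul_right, mul_mul_right, ← add_smul] at hsmul
  linear_combination smul_left_injective K (b.ne_zero 3) hsmul

lemma exists_repr_mul_two_ne_zero (hb : IsAdaptedBasis mul b) :
    ∃ x y, b.repr (mul x y) 2 ≠ 0 := by
  by_contra! h
  have hle : zpow mul 2 ≤ LinearMap.ker (b.coord 2) := zpow_add_two_le_iff.2 fun x y _ ↦ h x y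
  simpa using hle hb.two_mem

lemma exists_hasStructureConstants_symmTable (hb : IsAdaptedBasis mul b) (hmul : IsZinbiel mul)
    {c : K} (htwo : ∀ x, b.repr (mul (b 2) x) 3 = 2 * b.repr x 0)
    (hsymm : ∀ x y, b.repr (mul x y) 2 = c * (b.repr x 0 * b.repr y 0)) :
    ∃ r p q s, HasStructureConstants mul b (symmTable c r p q s) := by
  have two_mul (x : A) : mul (b 2) x = (2 * b.repr x 0) • b 3 := htwo x ▸ hb.two_mul hmul x
  have exists_mul_eq (x y : A) :
      ∃ t : K, mul x y = (c * (b.repr x 0 * b.repr y 0)) • b 2 + t • b 3 :=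
    ⟨_, hsymm x y ▸ hb.mul_eq x y⟩
  obtain ⟨r, h00⟩ := exists_mul_eq (b 0) (b 0)
  obtain ⟨p, h01⟩ := exists_mul_eq (b 0) (b 1)
  obtain ⟨q, h10⟩ := exists_mul_eq (b 1) (b 0)
  obtain ⟨s, h11⟩ := exists_mul_eq (b 1) (b 1)
  refine ⟨r, p, q, s, fun i j ↦ ?_⟩
  fin_cases i <;> fin_cases j <;>
    simp [symmTable, Fin.sum_univ_four, h00, h01, h10, h11, two_mul, hb.mul_two, hb.mul_three,
      hb.three_mul hmul]

lemma exists_hasStructureConstants_skewTable [NeZero (2 : K)] (hb : IsAdaptedBasis mul b)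
    (hmul : IsZinbiel mul) (htwo : ∀ x, b.repr (mul (b 2) x) 3 = 0)
    (hskew : ∀ x y, b.repr (mul y x) 2 = -b.repr (mul x y) 2) :
    ∃ c ≠ 0, ∃ r p q s, HasStructureConstants mul b (skewTable c r p q s) := by
  have two_mul (x : A) : mul (b 2) x = 0 := by rw [hb.two_mul hmul, htwo, zero_smul]
  have hself (x : A) : b.repr (mul x x) 2 = 0 :=
    (mul_eq_zero_iff_left two_ne_zero).1 (by linear_combination hskew x x)
  have exists_mul_eq (x y : A) : ∃ t : K, mul x y = b.repr (mul x y) 2 • b 2 + t • b 3 :=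
    ⟨_, hb.mul_eq x y⟩
  obtain ⟨p, h00⟩ := exists_mul_eq (b 0) (b 0)
  obtain ⟨r, h01⟩ := exists_mul_eq (b 0) (b 1)
  obtain ⟨q, h10⟩ := exists_mul_eq (b 1) (b 0)
  obtain ⟨s, h11⟩ := exists_mul_eq (b 1) (b 1)
  rw [hself] at h00 h11
  rw [hskew] at h10
  generalize b.repr (mul (b 0) (b 1)) 2 = c at h01 h10
  have htable : HasStructureConstants mul b (skewTable c r p q s) := fun i j ↦ by
    fin_cases i <;> fin_cases j <;>
      simp [skewTable, Fin.sum_univ_four, h00, h01, h10, h11, two_mul, hb.mul_two, hb.mul_three,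
        hb.three_mul hmul]
  refine ⟨c, ?_, r, p, q, s, htable⟩
  rintro rfl
  have hker : zpow mul 2 ≤ LinearMap.ker (b.coord 2) :=
    htable.zpow_two_le_ker_coord (by simp [skewTable, Fin.forall_fin_succ])
  simpa using hker hb.two_mem

theorem hasStructureConstants_symmTable_or_skewTable [NeZero (2 : K)] (hb : IsAdaptedBasis mul b)
    (hmul : IsZinbiel mul) :
    (∃ c ≠ 0, ∃ r p q s, HasStructureConstants mul b (symmTable c r p q s)) ∨
      ∃ c ≠ 0, ∃ r p q s, HasStructureConstants mul b (skewTable c r p q s) := by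
  rcases eq_mul_mul_or_skew (hb.repr_mul_mul_repr_mul hmul) ⟨b 0, by simp⟩
    hb.exists_repr_mul_two_ne_zero with ⟨htwo, c, hc, hsymm⟩ | ⟨htwo, hskew⟩
  · exact .inl ⟨c, hc, hb.exists_hasStructureConstants_symmTable hmul htwo hsymm⟩
  · exact .inr (hb.exists_hasStructureConstants_skewTable hmul htwo hskew)

end IsAdaptedBasis

end AdaptedBasis

section NormalForms

variable {A : Type*} [AddCommGroup A] [Module ℂ A] {mul : A →ₗ[ℂ] A →ₗ[ℂ] A}
  {b : Basis (Fin 4) ℂ A} {c r p q s : ℂ}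

lemma HasStructureConstants.isSplit_of_symmTable
    (h : HasStructureConstants mul b (symmTable c r p (2 * p) 0)) : IsSplit mul := by
  have hmul : ∀ i j, mul (b i) (b j) = _ := h
  have hleft : mul (b 1 - p • b 2) = 0 := b.ext fun j ↦ by
    fin_cases j <;> simp [hmul, symmTable, Fin.sum_univ_four, smul_smul, mul_comm]
  have hright : mul.flip (b 1 - p • b 2) = 0 := b.ext fun i ↦ by
    fin_cases i <;> simp [hmul, symmTable, Fin.sum_univ_four]
  have hker : zpow mul 2 ≤ LinearMap.ker (b.coord 1) :=
    h.zpow_two_le_ker_coord (by simp [symmTable, Fin.forall_fin_succ])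
  have h02 : mul (b 0) (b 2) = b 3 := by simp [hmul, symmTable, Fin.sum_univ_four]
  have hb₃ : b 3 ∈ zpow mul 2 := h02 ▸ mul_mem_zpow_succ (n := 1) (b 0) Submodule.mem_top
  exact isSplit_of_annihilator (LinearMap.congr_fun hleft) (LinearMap.congr_fun hright)
    (fun he ↦ by simpa using hker he) fun hbot ↦ b.ne_zero 3 (by simpa [hbot] using hb₃)

lemma HasStructureConstants.isom_mulOf_symmTable
    (h : HasStructureConstants mul b (symmTable c r p q s)) (hc : c ≠ 0) {t : ℂ} (ht : t ≠ 0)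
    (k m : ℂ) :
    Isom mul (mulOf 4 (symmTable 1 0 (t * (p + m + k * s) / c) (t * (q + 2 * m + k * s) / c)
      (t ^ 2 * s / c))) := by
  have hmul : ∀ i j, mul (b i) (b j) = _ := h
  refine isom_mulOf_of_triangular b ![b 0 + k • (b 1 + m • b 2), t • (b 1 + m • b 2),
    c • b 2 + (r + k * (p + q + 3 * m) + k ^ 2 * s) • b 3, c • b 3] ?_ ?_ fun i j ↦ ?_
  · simp [Fin.forall_fin_succ, hc, ht]
  · simp [Fin.forall_fin_succ]
  · fin_cases i <;> fin_cases j <;>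
      simp only [hmul, symmTable, Fin.sum_univ_four, Fin.isValue, Fin.zero_eta, Fin.mk_one,
        Fin.reduceFinMk, Matrix.cons_val, map_add, map_smul,
        LinearMap.add_apply, LinearMap.smul_apply] <;>
      match_scalars <;> field

lemma HasStructureConstants.isom_mulOf_skewTable
    (h : HasStructureConstants mul b (skewTable c r p q s)) (hc : c ≠ 0) {t : ℂ} (ht : t ≠ 0) :
    Isom mul (mulOf 4 (skewTable 1 0 0 0 (t * s / c))) := by
  have hmul : ∀ i j, mul (b i) (b j) = _ := h
  refine isom_mulOf_of_triangular b ![b 0 - p • b 2, t • (b 1 - (r + q) • b 2),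
    t • (c • b 2 - q • b 3), (t * c) • b 3] ?_ ?_ fun i j ↦ ?_
  · simp [Fin.forall_fin_succ, hc, ht]
  · simp [Fin.forall_fin_succ]
  · fin_cases i <;> fin_cases j <;>
      simp only [hmul, skewTable, Fin.sum_univ_four, Fin.isValue, Fin.zero_eta, Fin.mk_one,
        Fin.reduceFinMk, Matrix.cons_val, map_sub, map_smul,
        LinearMap.sub_apply, LinearMap.smul_apply] <;>
      match_scalars <;> field

lemma dim4Alg_one_zero : dim4Alg 1 0 = mulOf 4 (symmTable 1 0 1 0 0) := by
  simp [dim4Alg, dim4Table, symmTable]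

lemma dim4Alg_two_zero : dim4Alg 2 0 = mulOf 4 (symmTable 1 0 0 0 1) := by
  simp [dim4Alg, dim4Table, symmTable]

lemma dim4Alg_three_zero : dim4Alg 3 0 = mulOf 4 (skewTable 1 0 0 0 0) := by
  simp [dim4Alg, dim4Table, skewTable]

lemma dim4Alg_four_zero : dim4Alg 4 0 = mulOf 4 (skewTable 1 0 0 0 1) := by
  simp [dim4Alg, dim4Table, skewTable]

lemma HasStructureConstants.isom_dim4Alg_one
    (h : HasStructureConstants mul b (symmTable c r p q 0)) (hc : c ≠ 0) (hpq : q ≠ 2 * p) :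
    Isom mul (dim4Alg 1 0) := by
  have hpq' : 2 * p - q ≠ 0 := sub_ne_zero.2 hpq.symm
  have ht : 2 * c / (2 * p - q) ≠ 0 := by simp [hc, hpq']
  rw [dim4Alg_one_zero]
  convert h.isom_mulOf_symmTable hc ht 0 (-q / 2) using 3 <;> field

lemma HasStructureConstants.isom_dim4Alg_two
    (h : HasStructureConstants mul b (symmTable c r p q s)) (hc : c ≠ 0) (hs : s ≠ 0) :
    Isom mul (dim4Alg 2 0) := by
  obtain ⟨t, hts⟩ := IsAlgClosed.exists_pow_nat_eq (c / s) two_pos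
  have ht : t ≠ 0 := by rintro rfl; simp [hc, hs, eq_comm] at hts
  rw [dim4Alg_two_zero]
  -- The values of `k` and `m` solve the system `p + m + k * s = 0`, `q + 2 * m + k * s = 0`.
  convert h.isom_mulOf_symmTable hc ht ((q - 2 * p) / s) (p - q) using 3
  · field
  · field
  · rw [hts]
    field

lemma HasStructureConstants.isom_dim4Alg_three
    (h : HasStructureConstants mul b (skewTable c r p q 0)) (hc : c ≠ 0) :
    Isom mul (dim4Alg 3 0) := by
  rw [dim4Alg_three_zero]
  simpa using h.isom_mulOf_skewTable hc one_ne_zero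

lemma HasStructureConstants.isom_dim4Alg_four
    (h : HasStructureConstants mul b (skewTable c r p q s)) (hc : c ≠ 0) (hs : s ≠ 0) :
    Isom mul (dim4Alg 4 0) := by
  rw [dim4Alg_four_zero]
  convert h.isom_mulOf_skewTable hc (div_ne_zero hc hs) using 3
  field

end NormalForms

/-- Every 4-dimensional non-split complex Zinbiel algebra with
`dim A² = 2`, `dim A³ = 1`, `dim A⁴ = 0` is isomorphic to one of `A_2`, `A_3`, `A_4`,
`A_5` (none of which involves a parameter, so the parameter of `dim4Alg` is set to `0`). -/
theorem dim4_filiform_classification (A : Type*) [AddCommGroup A] [Module ℂ A]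
    [FiniteDimensional ℂ A]
    (mul : A →ₗ[ℂ] A →ₗ[ℂ] A) (hzin : IsZinbiel mul)
    (hdim : Module.finrank ℂ A = 4) (hns : ¬ IsSplit mul)
    (h2 : Module.finrank ℂ (zpow mul 2) = 2)
    (h3 : Module.finrank ℂ (zpow mul 3) = 1)
    (h4 : Module.finrank ℂ (zpow mul 4) = 0) :
    Isom mul (dim4Alg 1 0) ∨ Isom mul (dim4Alg 2 0) ∨
      Isom mul (dim4Alg 3 0) ∨ Isom mul (dim4Alg 4 0) := by
  obtain ⟨b, hb⟩ := hzin.exists_isAdaptedBasis hdim h2 h3 (Submodule.finrank_eq_zero.1 h4)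
  rcases hb.hasStructureConstants_symmTable_or_skewTable hzin with
    ⟨c, hc, r, p, q, s, h⟩ | ⟨c, hc, r, p, q, s, h⟩ <;> rcases eq_or_ne s 0 with rfl | hs
  · have hpq : q ≠ 2 * p := by
      rintro rfl
      exact hns h.isSplit_of_symmTable
    exact .inl (h.isom_dim4Alg_one hc hpq)
  · exact .inr (.inl (h.isom_dim4Alg_two hc hs))
  · exact .inr (.inr (.inl (h.isom_dim4Alg_three hc)))
  · exact .inr (.inr (.inr (h.isom_dim4Alg_four hc hs)))
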